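/- arXiv:2601.15157 — 4 statements merged into one kernel-verified Lean document; each statement's English description precedes it below -/
import Mathlib

section
/- Let K ≥ 0 and N ≥ 1 be integers and let f : [0,∞) → ℝ be locally integrable. Then f ∈ ℱ^{K,N} if and only if ℒ^K f ∈ ℛ^N. -/
open MeasureTheory Real

/-- The primitive operator `𝒫f(x) = ∫₀ˣ f(s) ds`. -/
noncomputable def Pop (f : ℝ → ℝ) : ℝ → ℝ := fun x => ∫ s in (0:ℝ)..x, f s

/-- The operator `ℒf = f - 𝒫f`. -/
noncomputable def Lop (f : ℝ → ℝ) : ℝ → ℝ := fun x => f x - Pop f x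

/-- `f ∈ ℱ^{K,N}`: there is a polynomial `p` of degree `< K` and `c ≥ 0` with
`|f(ℓ) - p(ℓ)eˡ| ≤ c(ℓ+1)^{N-1} e^{ℓ/2}` for all `ℓ ≥ 0`.  (For `K = 0` this forces
`p = 0`, so `ℛ^N = ℱ^{0,N}` is the class of Friedman–Ramanujan remainders.) -/
def MemFR (K N : ℕ) (f : ℝ → ℝ) : Prop :=
  ∃ p : Polynomial ℝ, p.degree < (K : WithBot ℕ) ∧
    ∃ c : ℝ, 0 ≤ c ∧ ∀ ℓ : ℝ, 0 ≤ ℓ →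
      |f ℓ - Polynomial.eval ℓ p * Real.exp ℓ| ≤ c * (ℓ + 1) ^ (N - 1) * Real.exp (ℓ / 2)

/-!
The operator `ℒ` sends `(q + q')eˣ` to `q'eˣ + q(0)`, so up to constants it lowers the degree of
the polynomial factor by one, and it preserves remainders. Conversely, integrating
`(e⁻ˢ 𝒫h)' = e⁻ˢ ℒh` gives `h = ℒh + eˣ ∫₀ˣ e⁻ˢ ℒh(s) ds`. If `ℒh` is a remainder, the integrand
decays exponentially, and replacing `∫₀ˣ` by `∫₀^∞ - ∫ₓ^∞` exhibits `h` as a multiple of `eˣ`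
plus a remainder. Hence `f ∈ ℱ^{K+1,N} ↔ ℒf ∈ ℱ^{K,N}`, and the theorem follows by iteration.
-/

open Asymptotics Filter Polynomial Set

section Polynomial

lemma degree_derivative_lt_of_degree_lt_succ {R : Type*} [Semiring R] {n : ℕ} {p : R[X]}
    (hp : p.degree < (n + 1 : ℕ)) : (derivative p).degree < n := by
  rw [degree_lt_iff_coeff_zero] at hp ⊢
  intro m hm
  rw [coeff_derivative, hp (m + 1) (by lia), zero_mul]

lemma exists_add_derivative_eq {R : Type*} [Ring R] {n : ℕ} {p : R[X]} (hp : p.degree < n) :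
    ∃ q : R[X], q.degree < n ∧ q + derivative q = p := by
  induction n generalizing p with
  | zero =>
    have hp₀ : p = 0 := by simpa using hp
    exact ⟨p, hp, by simp [hp₀]⟩
  | succ n ih =>
    obtain ⟨q, hq, hqp⟩ := ih (degree_derivative_lt_of_degree_lt_succ hp)
    have hq' : q.degree < (n + 1 : ℕ) := hq.trans (by exact_mod_cast n.lt_succ_self)
    refine ⟨p - q, (degree_sub_le p q).trans_lt (max_lt hp hq'), ?_⟩
    rw [derivative_sub, ← hqp]
    abel

lemma exists_derivative_eq {F : Type*} [Field F] [CharZero F] {n : ℕ} {p : F[X]}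
    (hp : p.degree < n) : ∃ q : F[X], q.degree < (n + 1 : ℕ) ∧ derivative q = p := by
  rw [degree_lt_iff_coeff_zero] at hp
  refine ⟨∑ i ∈ Finset.range n, monomial (i + 1) (p.coeff i / (i + 1)), ?_, ?_⟩
  · rw [degree_lt_iff_coeff_zero]
    intro m hm
    rw [finsetSum_coeff]
    refine Finset.sum_eq_zero fun i hi => coeff_monomial_of_ne _ ?_
    grind
  · ext m
    have hm : (m : F) + 1 ≠ 0 := by exact_mod_cast m.succ_ne_zero
    by_cases hmn : m < n
    · simp [coeff_monomial, hmn, hm]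
    · simp [coeff_monomial, hmn, hp m (not_lt.1 hmn)]

end Polynomial

section GrowthScale

/-- The comparison function `(x + 1)^M e^{bx}`. The bounds defining `ℱ^{K,N}` are `O`-bounds on
`[0, ∞)` against the one with `M = N - 1` and `b = 1 / 2`. -/
noncomputable def growthScale (M : ℕ) (b : ℝ) : ℝ → ℝ := fun x => (x + 1) ^ M * exp (b * x)

variable {E : Type*} [NormedAddCommGroup E] {f : ℝ → E} {M : ℕ} {b : ℝ}

lemma growthScale_nonneg {x : ℝ} (hx : 0 ≤ x) : 0 ≤ growthScale M b x := by
  unfold growthScale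
  positivity

lemma exp_mul_growthScale (a x : ℝ) :
    exp (a * x) * growthScale M b x = growthScale M (a + b) x := by
  simp only [growthScale, add_mul, Real.exp_add]
  ring

lemma isBigO_growthScale_iff : f =O[𝓟 (Ici 0)] growthScale M b ↔
    ∃ c, 0 ≤ c ∧ ∀ x, 0 ≤ x → ‖f x‖ ≤ c * growthScale M b x := by
  constructor
  · intro hf
    obtain ⟨c, hc, hfc⟩ := hf.exists_nonneg
    refine ⟨c, hc, fun x hx => ?_⟩
    rw [← Real.norm_of_nonneg (growthScale_nonneg hx)]
    exact isBigOWith_principal.1 hfc x hx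
  · rintro ⟨c, -, hfc⟩
    refine isBigO_principal.2 ⟨c, fun x hx => ?_⟩
    rw [Real.norm_of_nonneg (growthScale_nonneg hx)]
    exact hfc x hx

lemma isBigO_const_growthScale (hb : 0 ≤ b) (c : E) :
    (fun _ => c) =O[𝓟 (Ici 0)] growthScale M b := by
  refine isBigO_growthScale_iff.2 ⟨‖c‖, norm_nonneg c, fun x hx => ?_⟩
  have one_le_growthScale : 1 ≤ growthScale M b x :=
    one_le_mul_of_one_le_of_one_le (one_le_pow₀ (by linarith)) (one_le_exp (by positivity))
  exact le_mul_of_one_le_right (norm_nonneg c) one_le_growthScale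

lemma add_one_pow_le_mul_exp {δ x s : ℝ} (hδ : 0 < δ) (hx : 0 ≤ x) (hxs : x ≤ s) :
    (s + 1) ^ M ≤ M.factorial * exp δ / δ ^ M * (x + 1) ^ M * exp (δ * (s - x)) := by
  have hsx : 0 ≤ s - x := sub_nonneg.2 hxs
  have pow_le_exp : (s - x + 1) ^ M ≤ M.factorial * exp δ / δ ^ M * exp (δ * (s - x)) := by
    have h := pow_div_factorial_le_exp (x := δ * (s - x + 1)) (by positivity) M
    rw [mul_add, mul_one, Real.exp_add, div_le_iff₀ (by positivity), ← mul_add_one, mul_pow] at h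
    rw [div_mul_eq_mul_div, le_div_iff₀ (by positivity)]
    linarith
  calc (s + 1) ^ M ≤ ((x + 1) * (s - x + 1)) ^ M := by
        have hs : 0 ≤ s := hx.trans hxs
        gcongr
        nlinarith [mul_nonneg hx hsx]
    _ = (x + 1) ^ M * (s - x + 1) ^ M := mul_pow _ _ _
    _ ≤ (x + 1) ^ M * (M.factorial * exp δ / δ ^ M * exp (δ * (s - x))) := by gcongr
    _ = _ := by ring

-- Half of the exponential decay absorbs the growth of the polynomial factor between `x` and `s`.
lemma exists_growthScale_le (M : ℕ) (hb : b < 0) : ∃ C, 0 ≤ C ∧ ∀ x s, 0 ≤ x → x ≤ s →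
    growthScale M b s ≤ C * growthScale M (b / 2) x * exp (b / 2 * s) := by
  have hδ : 0 < -b / 2 := by linarith
  refine ⟨M.factorial * exp (-b / 2) / (-b / 2) ^ M, by positivity, fun x s hx hxs => ?_⟩
  calc growthScale M b s
      ≤ M.factorial * exp (-b / 2) / (-b / 2) ^ M * (x + 1) ^ M * exp (-b / 2 * (s - x))
          * exp (b * s) := by
        unfold growthScale
        gcongr
        exact add_one_pow_le_mul_exp hδ hx hxs
    _ = M.factorial * exp (-b / 2) / (-b / 2) ^ M * (x + 1) ^ M
          * exp (-b / 2 * (s - x) + b * s) := by rw [Real.exp_add, mul_assoc]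
    _ = M.factorial * exp (-b / 2) / (-b / 2) ^ M * (x + 1) ^ M
          * exp (b / 2 * x + b / 2 * s) := by ring_nf
    _ = _ := by
        rw [Real.exp_add, growthScale]
        ring

lemma integrableAtFilter_growthScale (hb : b < 0) : IntegrableAtFilter (growthScale M b) atTop := by
  obtain ⟨C, -, hscale⟩ := exists_growthScale_le M hb
  refine ⟨Ioi 0, Ioi_mem_atTop 0, ((integrableOn_exp_mul_Ioi (a := b / 2) (by linarith) 0).const_mul
    (C * growthScale M (b / 2) 0)).mono' ?_ ?_⟩
  · exact Continuous.aestronglyMeasurable (by unfold growthScale; fun_prop)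
  · refine ae_restrict_of_forall_mem measurableSet_Ioi fun s hs => ?_
    have hs : 0 ≤ s := le_of_lt hs
    rw [Real.norm_of_nonneg (growthScale_nonneg hs)]
    exact hscale 0 s le_rfl hs

variable [NormedSpace ℝ E]

lemma isBigO_integral_growthScale (hb : 0 < b) (hf : f =O[𝓟 (Ici 0)] growthScale M b) :
    (fun x => ∫ s in 0..x, f s) =O[𝓟 (Ici 0)] growthScale M b := by
  obtain ⟨c, hc, hfc⟩ := isBigO_growthScale_iff.1 hf
  refine isBigO_growthScale_iff.2 ⟨c / b, by positivity, fun x hx => ?_⟩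
  have norm_le : ∀ s ∈ Ioc 0 x, ‖f s‖ ≤ c * (x + 1) ^ M * exp (b * s) := by
    rintro s ⟨hs, hsx⟩
    refine (hfc s hs.le).trans ?_
    rw [growthScale, ← mul_assoc]
    gcongr
  calc ‖∫ s in 0..x, f s‖ ≤ ∫ s in 0..x, c * (x + 1) ^ M * exp (b * s) :=
        intervalIntegral.norm_integral_le_of_norm_le hx (.of_forall norm_le)
          (Continuous.intervalIntegrable (by fun_prop) 0 x)
    _ = c * (x + 1) ^ M * ((exp (b * x) - 1) / b) := by
        rw [intervalIntegral.integral_const_mul,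
          intervalIntegral.integral_comp_mul_left _ hb.ne', integral_exp]
        simp [div_eq_inv_mul]
    _ ≤ c * (x + 1) ^ M * (exp (b * x) / b) := by
        gcongr
        linarith
    _ = c / b * growthScale M b x := by
        rw [growthScale]
        ring

lemma isBigO_integral_Ioi_growthScale (hb : b < 0) (hf : f =O[𝓟 (Ici 0)] growthScale M b) :
    (fun x => ∫ s in Ioi x, f s) =O[𝓟 (Ici 0)] growthScale M b := by
  obtain ⟨c, hc, hfc⟩ := isBigO_growthScale_iff.1 hf
  obtain ⟨C, hC, hscale⟩ := exists_growthScale_le M hb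
  have hb₂ : b / 2 < 0 := by linarith
  refine isBigO_growthScale_iff.2 ⟨c * C / -(b / 2), ?_, fun x hx => ?_⟩
  · exact div_nonneg (mul_nonneg hc hC) (by linarith)
  have norm_le : ∀ s ∈ Ioi x, ‖f s‖ ≤ c * (C * growthScale M (b / 2) x) * exp (b / 2 * s) := by
    intro s hs
    refine (hfc s (hx.trans (le_of_lt hs))).trans ?_
    rw [mul_assoc]
    gcongr
    exact hscale x s hx (le_of_lt hs)
  calc ‖∫ s in Ioi x, f s‖
      ≤ ∫ s in Ioi x, c * (C * growthScale M (b / 2) x) * exp (b / 2 * s) :=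
        norm_integral_le_of_norm_le ((integrableOn_exp_mul_Ioi hb₂ x).const_mul _)
          (ae_restrict_of_forall_mem measurableSet_Ioi norm_le)
    _ = c * C / -(b / 2) * (exp (b / 2 * x) * growthScale M (b / 2) x) := by
        rw [integral_const_mul, integral_exp_mul_Ioi hb₂]
        ring
    _ = c * C / -(b / 2) * growthScale M b x := by rw [exp_mul_growthScale, add_halves]

end GrowthScale

section Operators

variable {f g : ℝ → ℝ} {x : ℝ}

lemma locallyIntegrableOn_Ici_iff {E : Type*} [NormedAddCommGroup E] {f : ℝ → E} {a : ℝ} :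
    LocallyIntegrableOn f (Ici a) ↔ ∀ x, a ≤ x → IntervalIntegrable f volume a x := by
  rw [locallyIntegrableOn_iff isClosed_Ici.isLocallyClosed]
  constructor
  · intro h x hx
    rw [intervalIntegrable_iff_integrableOn_Icc_of_le hx]
    exact h _ Icc_subset_Ici_self isCompact_Icc
  · intro h k hk hkc
    obtain ⟨u, hu⟩ := hkc.bddAbove
    refine ((intervalIntegrable_iff_integrableOn_Icc_of_le (le_max_left a u)).1
      (h _ (le_max_left a u))).mono_set fun y hy => ⟨hk hy, (hu hy).trans (le_max_right a u)⟩

lemma locallyIntegrableOn_Pop (hf : LocallyIntegrableOn f (Ici 0)) :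
    LocallyIntegrableOn (Pop f) (Ici 0) :=
  locallyIntegrableOn_Ici_iff.2 fun x hx =>
    (intervalIntegral.continuousOn_primitive_interval'
      (locallyIntegrableOn_Ici_iff.1 hf x hx) left_mem_uIcc).intervalIntegrable

lemma locallyIntegrableOn_Lop (hf : LocallyIntegrableOn f (Ici 0)) :
    LocallyIntegrableOn (Lop f) (Ici 0) :=
  hf.sub (locallyIntegrableOn_Pop hf)

lemma Lop_sub (hf : IntervalIntegrable f volume 0 x) (hg : IntervalIntegrable g volume 0 x) :
    Lop (f - g) x = Lop f x - Lop g x := by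
  simp only [Lop, Pop, Pi.sub_apply, intervalIntegral.integral_sub hf hg]
  ring

lemma integral_exp_neg_mul_Lop (hf : IntervalIntegrable f volume 0 x) :
    ∫ s in 0..x, exp (-s) * Lop f s = exp (-x) * Pop f x := by
  have exp_ac : AbsolutelyContinuousOnInterval (fun s => exp (-s)) 0 x :=
    ContDiffOn.absolutelyContinuousOnInterval (by fun_prop)
  have Pop_ac : AbsolutelyContinuousOnInterval (Pop f) 0 x :=
    hf.absolutelyContinuousOnInterval_intervalIntegral left_mem_uIcc
  have deriv_ae : ∀ᵐ s, s ∈ uIoc 0 x →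
      exp (-s) * Lop f s = deriv (fun s => exp (-s)) s * Pop f s + exp (-s) * deriv (Pop f) s := by
    filter_upwards [hf.ae_hasDerivAt_integral] with s hs hsx
    have deriv_Pop : deriv (Pop f) s = f s :=
      (hs (uIoc_subset_uIcc hsx) 0 left_mem_uIcc).deriv
    have deriv_exp : deriv (fun s => exp (-s)) s = -exp (-s) := by
      simpa using ((hasDerivAt_neg s).exp).deriv
    rw [deriv_Pop, deriv_exp, Lop]
    ring
  rw [intervalIntegral.integral_congr_ae deriv_ae, exp_ac.integral_deriv_mul_eq_sub Pop_ac]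
  simp [Pop]

lemma eq_Lop_add_exp_mul_integral (hf : IntervalIntegrable f volume 0 x) :
    f x = Lop f x + exp x * ∫ s in 0..x, exp (-s) * Lop f s := by
  rw [integral_exp_neg_mul_Lop hf, ← mul_assoc, ← Real.exp_add]
  simp [Lop]

end Operators

section Remainders

variable {f : ℝ → ℝ} {M : ℕ} {b : ℝ}

lemma isBigO_Lop_growthScale (hb : 0 < b) (hf : f =O[𝓟 (Ici 0)] growthScale M b) :
    Lop f =O[𝓟 (Ici 0)] growthScale M b :=
  hf.sub (isBigO_integral_growthScale hb hf)

lemma exists_isBigO_sub_mul_exp_of_isBigO_Lop (hb : b < 1) (hf : LocallyIntegrableOn f (Ici 0))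
    (hL : Lop f =O[𝓟 (Ici 0)] growthScale M b) :
    ∃ C, (fun x => f x - C * exp x) =O[𝓟 (Ici 0)] growthScale M b := by
  set g : ℝ → ℝ := fun s => exp (-s) * Lop f s
  have g_isBigO : g =O[𝓟 (Ici 0)] growthScale M (-1 + b) := by
    refine ((isBigO_refl (fun s => exp (-s)) _).mul hL).congr_right fun x => ?_
    rw [← exp_mul_growthScale, neg_one_mul]
  have g_integrableOn : IntegrableOn g (Ioi 0) := by
    have g_locallyIntegrableOn : LocallyIntegrableOn g (Ici 0) :=
      (locallyIntegrableOn_Lop hf).continuousOn_mul (by fun_prop) isClosed_Ici.isLocallyClosed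
    refine (g_locallyIntegrableOn.integrableOn_of_isBigO_atTop (g_isBigO.mono ?_)
      (integrableAtFilter_growthScale (by linarith))).mono_set Ioi_subset_Ici_self
    exact le_principal_iff.2 (Ici_mem_atTop 0)
  have tail_isBigO : (fun x => exp x * ∫ s in Ioi x, g s) =O[𝓟 (Ici 0)] growthScale M b := by
    refine ((isBigO_refl exp _).mul
      (isBigO_integral_Ioi_growthScale (by linarith) g_isBigO)).congr_right fun x => ?_
    simpa using exp_mul_growthScale (M := M) (b := -1 + b) 1 x
  refine ⟨∫ s in Ioi 0, g s, (hL.sub tail_isBigO).congr' ?_ .rfl⟩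
  refine eventually_principal.2 fun x hx => ?_
  have f_eq := eq_Lop_add_exp_mul_integral (locallyIntegrableOn_Ici_iff.1 hf x hx)
  have integral_split := intervalIntegral.integral_interval_add_Ioi g_integrableOn
    (g_integrableOn.mono_set (Ioi_subset_Ioi hx))
  beta_reduce
  rw [f_eq, ← integral_split]
  ring

end Remainders

section ExpPoly

/-- The function `x ↦ p(x) eˣ`, the principal term of a Friedman–Ramanujan function. -/
noncomputable def expPoly (p : ℝ[X]) : ℝ → ℝ := fun x => p.eval x * exp x

variable {f : ℝ → ℝ} {K N M : ℕ} {b : ℝ}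

lemma memFR_iff_isBigO : MemFR K N f ↔ ∃ p : ℝ[X], p.degree < K ∧
    (f - expPoly p) =O[𝓟 (Ici 0)] growthScale (N - 1) (1 / 2) := by
  simp only [MemFR, isBigO_growthScale_iff, growthScale, expPoly, Pi.sub_apply, Real.norm_eq_abs,
    ← mul_assoc, one_div_mul_eq_div]

lemma continuous_expPoly (p : ℝ[X]) : Continuous (expPoly p) :=
  p.continuous.mul Real.continuous_exp

lemma Lop_expPoly_add_derivative (q : ℝ[X]) (x : ℝ) :
    Lop (expPoly (q + derivative q)) x = expPoly (derivative q) x + q.eval 0 := by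
  have hasDerivAt_expPoly (s : ℝ) : HasDerivAt (expPoly q) (expPoly (q + derivative q) s) s := by
    refine ((q.hasDerivAt s).mul (Real.hasDerivAt_exp s)).congr_deriv ?_
    rw [expPoly, eval_add]
    ring
  have Pop_eq : Pop (expPoly (q + derivative q)) x = expPoly q x - expPoly q 0 :=
    intervalIntegral.integral_eq_sub_of_hasDerivAt (fun s _ => hasDerivAt_expPoly s)
      ((continuous_expPoly _).intervalIntegrable 0 x)
  rw [Lop, Pop_eq]
  simp only [expPoly, eval_add, Real.exp_zero]
  ring

lemma isBigO_Lop_sub_expPoly_iff (hb : 0 ≤ b) (hf : LocallyIntegrableOn f (Ici 0)) (q : ℝ[X]) :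
    Lop (f - expPoly (q + derivative q)) =O[𝓟 (Ici 0)] growthScale M b ↔
      (Lop f - expPoly (derivative q)) =O[𝓟 (Ici 0)] growthScale M b := by
  have Lop_eqOn : EqOn (Lop (f - expPoly (q + derivative q)))
      (fun x => (Lop f - expPoly (derivative q)) x - q.eval 0) (Ici 0) := by
    intro x hx
    rw [Lop_sub (locallyIntegrableOn_Ici_iff.1 hf x hx)
      ((continuous_expPoly _).intervalIntegrable 0 x), Lop_expPoly_add_derivative, ← sub_sub]
    rfl
  rw [isBigO_congr (eventuallyEq_principal.2 Lop_eqOn) .rfl]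
  exact (isBigO_const_growthScale hb _).sub_iff_left

lemma memFR_succ_iff (hf : LocallyIntegrableOn f (Ici 0)) :
    MemFR (K + 1) N f ↔ MemFR K N (Lop f) := by
  simp only [memFR_iff_isBigO]
  constructor
  · rintro ⟨p, hp, hfp⟩
    obtain ⟨q, hq, rfl⟩ := exists_add_derivative_eq hp
    exact ⟨derivative q, degree_derivative_lt_of_degree_lt_succ hq,
      (isBigO_Lop_sub_expPoly_iff (by norm_num) hf q).1 (isBigO_Lop_growthScale (by norm_num) hfp)⟩
  · rintro ⟨p, hp, hLp⟩
    obtain ⟨q, hq, rfl⟩ := exists_derivative_eq hp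
    have hfq : LocallyIntegrableOn (f - expPoly (q + derivative q)) (Ici 0) :=
      hf.sub ((continuous_expPoly _).locallyIntegrable.locallyIntegrableOn _)
    obtain ⟨c, hc⟩ := exists_isBigO_sub_mul_exp_of_isBigO_Lop (by norm_num) hfq
      ((isBigO_Lop_sub_expPoly_iff (by norm_num) hf q).2 hLp)
    refine ⟨q + derivative q + C c, ?_, hc.congr_left fun x => ?_⟩
    · simp only [← mem_degreeLT] at hp hq ⊢
      have hc' : C c ∈ degreeLT ℝ (K + 1) :=
        mem_degreeLT.2 (degree_C_le.trans_lt (by exact_mod_cast K.succ_pos))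
      exact add_mem (add_mem hq (degreeLT_mono K.le_succ hp)) hc'
    · simp only [expPoly, Pi.sub_apply, eval_add, eval_C]
      ring

end ExpPoly

/-- `f ∈ ℱ^{K,N}` if and only if `ℒ^K f ∈ ℛ^N = ℱ^{0,N}`. -/
theorem memFR_iff_Lop_iterate_memRemainder (K N : ℕ) (hN : 1 ≤ N) (f : ℝ → ℝ)
    (hf : LocallyIntegrableOn f (Set.Ici (0:ℝ))) :
    MemFR K N f ↔ MemFR 0 N (Lop^[K] f) := by
  induction K generalizing f with
  | zero => rfl
  | succ K ih =>
    rw [memFR_succ_iff hf, ih (Lop f) (locallyIntegrableOn_Lop hf), Function.iterate_succ_apply]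
end

section
/- Let a > 0, n ≥ 1, and let g : [a,∞)^n → ℝ be C^∞. Suppose that for every multi-index α ∈ {0,1}^n with α ≠ (0,…,0), one has sup_{x ∈ [a,∞)^n} e^{α·x} |∂^α g(x)| < ∞, where ∂^α denotes the partial derivative ∏_{i : αᵢ = 1} ∂/∂xᵢ and α·x = ∑ᵢ αᵢ xᵢ. Then g is bounded on [a,∞)^n. -/
open Real

/-- The partial derivative `∂/∂xᵢ` within a set `B`. -/
noncomputable def pdW {n : ℕ} (B : Set (Fin n → ℝ)) (i : Fin n)
    (g : (Fin n → ℝ) → ℝ) : (Fin n → ℝ) → ℝ :=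
  fun x => fderivWithin ℝ g B x (Pi.single i 1)

/-- The iterated partial derivative `∂^α = ∏_{i ∈ S} ∂/∂xᵢ` (for a multi-index
`α ∈ {0,1}^n` with support `S`), within a set `B`, taken in increasing order of indices. -/
noncomputable def pdMultiW {n : ℕ} (B : Set (Fin n → ℝ)) (S : Finset (Fin n))
    (g : (Fin n → ℝ) → ℝ) : (Fin n → ℝ) → ℝ :=
  (S.sort (· ≤ ·)).foldr (pdW B) g

/-! Since `∫_{aᵢ}^∞ e^{-t} dt = e^{-aᵢ}` is finite, a bound `|∂ᵢ g| ≤ Cᵢ e^{-xᵢ}` lets `g` change by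
at most `Cᵢ e^{-aᵢ}` when the `i`-th coordinate of `x` is moved down to that of the corner `a` of the
box. Moving the coordinates one after another gives `‖g x - g a‖ ≤ ∑ᵢ Cᵢ e^{-aᵢ}`. -/

open Set Function

section Corner

variable {ι M : Type*} {α : ι → Type*} [DecidableEq ι] [∀ i, Preorder (α i)]
  [PseudoMetricSpace M] {f : (∀ i, α i) → M} {a x : ∀ i, α i} {C : ι → ℝ}

theorem update_mem_Ici (hx : x ∈ Ici a) {i : ι} {t : α i} (ht : t ∈ Ici (a i)) :
    update x i t ∈ Ici a :=
  le_update_iff.2 ⟨ht, fun j _ => hx j⟩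

theorem dist_piecewise_le_sum (hf : ∀ i, ∀ y ∈ Ici a, dist (f y) (f (update y i (a i))) ≤ C i)
    (hx : x ∈ Ici a) (s : Finset ι) : dist (f x) (f (s.piecewise a x)) ≤ ∑ i ∈ s, C i := by
  induction s using Finset.induction_on with
  | empty => simp
  | insert i s hi ih =>
    have hmem : s.piecewise a x ∈ Ici a := Finset.le_piecewise_of_le_of_le s le_rfl hx
    rw [Finset.piecewise_insert, Finset.sum_insert hi, add_comm]
    exact (dist_triangle _ _ _).trans (add_le_add ih (hf i _ hmem))

theorem dist_corner_le_sum [Fintype ι]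
    (hf : ∀ i, ∀ y ∈ Ici a, dist (f y) (f (update y i (a i))) ≤ C i) (hx : x ∈ Ici a) :
    dist (f x) (f a) ≤ ∑ i, C i := by
  simpa only [Finset.piecewise_univ] using dist_piecewise_le_sum hf hx Finset.univ

end Corner

section ExpDecay

variable {E : Type*} [NormedAddCommGroup E] [NormedSpace ℝ E]

theorem norm_sub_le_of_norm_deriv_right_le_mul_exp_neg {f f' : ℝ → E} {a b C : ℝ}
    (hf : ContinuousOn f (Icc a b)) (hf' : ∀ t ∈ Ico a b, HasDerivWithinAt f (f' t) (Ici t) t)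
    (bound : ∀ t ∈ Ico a b, ‖f' t‖ ≤ C * exp (-t)) {t : ℝ} (ht : t ∈ Icc a b) :
    ‖f t - f a‖ ≤ C * (exp (-a) - exp (-t)) := by
  have hB (s : ℝ) : HasDerivAt (fun s => C * (exp (-a) - exp (-s))) (C * exp (-s)) s :=
    (((hasDerivAt_neg s).exp.const_sub (exp (-a))).const_mul C).congr_deriv (by ring)
  exact image_norm_le_of_norm_deriv_right_le_deriv_boundary (hf.sub continuousOn_const)
    (fun s hs => (hf' s hs).sub_const (f a)) (by simp) hB bound ht

theorem norm_sub_le_of_exp_mul_norm_deriv_le {f f' : ℝ → E} {a b C : ℝ} (hab : a ≤ b)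
    (hf : ∀ t ∈ Ici a, HasDerivWithinAt f (f' t) (Ici a) t)
    (bound : ∀ t ∈ Ici a, exp t * ‖f' t‖ ≤ C) : ‖f b - f a‖ ≤ C * exp (-a) := by
  have hC : 0 ≤ C := le_trans (by positivity) (bound a self_mem_Ici)
  have bound' (t : ℝ) (ht : t ∈ Ici a) : ‖f' t‖ ≤ C * exp (-t) := by
    rw [exp_neg, ← div_eq_mul_inv, le_div_iff₀' (exp_pos t)]
    exact bound t ht
  calc ‖f b - f a‖ ≤ C * (exp (-a) - exp (-b)) :=
        norm_sub_le_of_norm_deriv_right_le_mul_exp_neg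
          (fun t ht => ((hf t ht.1).mono Icc_subset_Ici_self).continuousWithinAt)
          (fun t ht => (hf t ht.1).mono (Ici_subset_Ici.2 ht.1))
          (fun t ht => bound' t ht.1) (right_mem_Icc.2 hab)
    _ ≤ C * exp (-a) := by
        gcongr
        exact sub_le_self _ (exp_pos _).le

variable {ι : Type*} [DecidableEq ι] {a : ι → ℝ} {g : (ι → ℝ) → E}

theorem norm_sub_update_le_of_exp_mul_norm_partialDeriv_le {i : ι} {g' : (ι → ℝ) → E} {C : ℝ}
    (hg : ∀ x ∈ Ici a, HasDerivWithinAt (fun t => g (update x i t)) (g' x) (Ici (a i)) (x i))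
    (bound : ∀ x ∈ Ici a, exp (x i) * ‖g' x‖ ≤ C) {x : ι → ℝ} (hx : x ∈ Ici a) :
    ‖g x - g (update x i (a i))‖ ≤ C * exp (-a i) := by
  have hline := norm_sub_le_of_exp_mul_norm_deriv_le (f := fun t => g (update x i t))
    (f' := fun t => g' (update x i t)) (hx i)
    (fun t ht => by simpa using hg _ (update_mem_Ici hx ht))
    (fun t ht => by simpa using bound _ (update_mem_Ici hx ht))
  simpa only [update_eq_self] using hline

theorem bounded_of_exp_decay_derivs_general [Finite ι] {g' : ι → (ι → ℝ) → E}
    (hg : ∀ i, ∀ x ∈ Ici a,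
      HasDerivWithinAt (fun t => g (update x i t)) (g' i x) (Ici (a i)) (x i))
    (hbd : ∀ i, ∃ C : ℝ, ∀ x ∈ Ici a, exp (x i) * ‖g' i x‖ ≤ C) :
    ∃ C : ℝ, ∀ x ∈ Ici a, ‖g x‖ ≤ C := by
  have := Fintype.ofFinite ι
  choose C hC using hbd
  have hdist {x : ι → ℝ} (hx : x ∈ Ici a) : dist (g x) (g a) ≤ ∑ i, C i * exp (-a i) :=
    dist_corner_le_sum (fun i y hy => (dist_eq_norm _ _).trans_le <|
      norm_sub_update_le_of_exp_mul_norm_partialDeriv_le (hg i) (hC i) hy) hx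
  refine ⟨‖g a‖ + ∑ i, C i * exp (-a i), fun x hx => ?_⟩
  calc ‖g x‖ ≤ ‖g a‖ + ‖g x - g a‖ := norm_le_norm_add_norm_sub' _ _
    _ ≤ ‖g a‖ + ∑ i, C i * exp (-a i) := by grw [← dist_eq_norm, hdist hx]

end ExpDecay

theorem pdMultiW_singleton {n : ℕ} (B : Set (Fin n → ℝ)) (i : Fin n) (g : (Fin n → ℝ) → ℝ) :
    pdMultiW B {i} g = pdW B i g := by
  simp only [pdMultiW, Finset.sort_singleton, List.foldr_cons, List.foldr_nil]

theorem hasDerivWithinAt_update_pdW {n : ℕ} {a x : Fin n → ℝ} {g : (Fin n → ℝ) → ℝ}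
    (hg : DifferentiableWithinAt ℝ g (Ici a) x) (hx : x ∈ Ici a) (i : Fin n) :
    HasDerivWithinAt (fun t => g (update x i t)) (pdW (Ici a) i g x) (Ici (a i)) (x i) :=
  hg.hasFDerivWithinAt.comp_hasDerivWithinAt_of_eq (x i)
    (hasDerivAt_update x i (x i)).hasDerivWithinAt (fun _ ht => update_mem_Ici hx ht)
    (update_eq_self i x).symm

/-- If `g` is `C^∞` on the box `[a,∞)ⁿ` and every partial derivative `∂^α g`, for a multi-index
`α ∈ {0,1}ⁿ`, `α ≠ 0`, satisfies `sup_{x ∈ [a,∞)ⁿ} e^{α·x}|∂^α g(x)| < ∞`, then `g` is bounded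
on `[a,∞)ⁿ`. -/
theorem bounded_of_exp_decay_derivs (n : ℕ) (hn : 1 ≤ n) (a : ℝ) (ha : 0 < a)
    (g : (Fin n → ℝ) → ℝ)
    (hg : ContDiffOn ℝ (⊤ : ℕ∞) g {x : Fin n → ℝ | ∀ i, a ≤ x i})
    (hbd : ∀ S : Finset (Fin n), S.Nonempty →
      ∃ C : ℝ, ∀ x : Fin n → ℝ, (∀ i, a ≤ x i) →
        Real.exp (∑ i ∈ S, x i) *
          |pdMultiW {y : Fin n → ℝ | ∀ i, a ≤ y i} S g x| ≤ C) :
    ∃ C : ℝ, ∀ x : Fin n → ℝ, (∀ i, a ≤ x i) → |g x| ≤ C := by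
  refine bounded_of_exp_decay_derivs_general (a := fun _ => a)
    (fun i x hx => hasDerivWithinAt_update_pdW (hg.differentiableOn (by simp) x hx) hx i)
    fun i => ?_
  simpa only [pdMultiW_singleton, Finset.sum_singleton] using! hbd {i} (Finset.singleton_nonempty i)
end

section
/- Let r ≥ 1 be an integer and for k = 1,…,2r let L_k, θ_k ∈ ℝ and ε_k ∈ {−1, +1}. Define the 2×2 real matrices a_k = [[e^{ε_k L_k/2}, 0], [0, e^{−ε_k L_k/2}]] and b_k = [[cosh(θ_k/2), sinh(θ_k/2)], [sinh(θ_k/2), cosh(θ_k/2)]]. Then (1/2)·Tr(a₁b₁a₂b₂⋯a_{2r}b_{2r}) = ∑_{δ} (∏_{k=1}^{2r} hyp_{δ_k}(θ_k/2)) · cosh((1/2) ∑_{k=1}^{2r} ρ^δ_k ε_k L_k), where the sum runs over all δ = (δ₁,…,δ_{2r}) ∈ {−1,+1}^{2r} with δ₁δ₂⋯δ_{2r} = +1, ρ^δ_k := ∏_{1 ≤ j < k} δ_j (equal to 1 for k = 1), and hyp_{+1} = cosh, hyp_{−1} = sinh. -/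
open Real Matrix

open scoped Classical

/-- `hyp_{+1} = cosh`, `hyp_{-1} = sinh`, encoded on booleans: `true ↦ cosh`, `false ↦ sinh`. -/
noncomputable def hypb (b : Bool) (x : ℝ) : ℝ := if b then Real.cosh x else Real.sinh x

/-- The sign `+1`/`-1` attached to a boolean. -/
def sgnb (b : Bool) : ℝ := if b then 1 else -1

/-!
Write `D x = diag (e^x, e^{-x})` and let `J` be the matrix swapping the two coordinates. Each
factor `b = cosh t • 1 + sinh t • J` is a combination of `1 = J⁰` and `J`, so the whole product
expands into a sum over sign vectors `δ` of words in the `D (x k)` and `J`. Since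
`J * D x = D (-x) * J`, every `J` can be moved to the right, flipping the signs of the
translations it passes; the word becomes `D (∑ k, ρ^δ k * x k) * J ^ m`, with `m` the number of
`-1`s in `δ`. Its trace is `2 * cosh (∑ k, ρ^δ k * x k)` for `m` even and `0` for `m` odd.
-/

/-- The matrix `diag (e^x, e^{-x})` of the hyperbolic translation by `2 * x` along the imaginary
axis; the paper's `a_k` is `translationMatrix (ε_k * L_k / 2)`. -/
noncomputable def translationMatrix (x : ℝ) : Matrix (Fin 2) (Fin 2) ℝ :=
  !![Real.exp x, 0; 0, Real.exp (-x)]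

/-- The matrix of the hyperbolic translation by `2 * t` along the axis from `-1` to `1`; the
paper's `b_k` is `boostMatrix (θ_k / 2)`. -/
noncomputable def boostMatrix (t : ℝ) : Matrix (Fin 2) (Fin 2) ℝ :=
  !![Real.cosh t, Real.sinh t; Real.sinh t, Real.cosh t]

/-- The symmetric matrix with eigenvalue `1` on `(1, 1)` and `q` on `(1, -1)`. It is the identity
for `q = 1` and the coordinate swap for `q = -1`; allowing every real `q` makes it
multiplicative in `q` without case distinctions. -/
noncomputable def swapMatrix (q : ℝ) : Matrix (Fin 2) (Fin 2) ℝ :=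
  !![(1 + q) / 2, (1 - q) / 2; (1 - q) / 2, (1 + q) / 2]

/-- The sign `ρ^δ_k = ∏_{j < k} δ_j` accumulated strictly before position `k`. -/
noncomputable def prefixSign {n : ℕ} (δ : Fin n → Bool) (k : Fin n) : ℝ :=
  ∏ j ∈ Finset.univ.filter (fun j => j < k), sgnb (δ j)

/-- The total translation `∑_k ρ^δ_k x_k` left after all swaps of the word `δ` have been moved to
its right end. -/
noncomputable def signedSum {n : ℕ} (x : Fin n → ℝ) (δ : Fin n → Bool) : ℝ :=
  ∑ k, prefixSign δ k * x k

section Signs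

variable {n : ℕ}

lemma sgnb_mul_self (d : Bool) : sgnb d * sgnb d = 1 := by
  cases d <;> simp [sgnb]

lemma prod_sgnb_eq_one_or_neg_one {ι : Type*} (s : Finset ι) (δ : ι → Bool) :
    ∏ k ∈ s, sgnb (δ k) = 1 ∨ ∏ k ∈ s, sgnb (δ k) = -1 := by
  rw [← mul_self_eq_one_iff, ← Finset.prod_mul_distrib]
  exact Finset.prod_eq_one fun k _ => sgnb_mul_self (δ k)

lemma prefixSign_zero (δ : Fin (n + 1) → Bool) : prefixSign δ 0 = 1 := by
  simp [prefixSign]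

lemma prefixSign_succ (δ : Fin (n + 1) → Bool) (k : Fin n) :
    prefixSign δ k.succ = sgnb (δ 0) * prefixSign (Fin.tail δ) k := by
  simp [prefixSign, Finset.prod_filter, Fin.prod_univ_succ, Fin.tail]

lemma signedSum_succ (x : Fin (n + 1) → ℝ) (δ : Fin (n + 1) → Bool) :
    signedSum x δ = x 0 + sgnb (δ 0) * signedSum (Fin.tail x) (Fin.tail δ) := by
  simp only [signedSum, Fin.sum_univ_succ, prefixSign_zero, prefixSign_succ, one_mul,
    Finset.mul_sum, mul_assoc, Fin.tail]

end Signs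

section MatrixRelations

lemma translationMatrix_zero : translationMatrix 0 = 1 := by
  simp [translationMatrix, Matrix.one_fin_two]

lemma translationMatrix_add (x y : ℝ) :
    translationMatrix (x + y) = translationMatrix x * translationMatrix y := by
  simp [translationMatrix, Real.exp_add, mul_comm]

lemma swapMatrix_one : swapMatrix 1 = 1 := by
  simp [swapMatrix, Matrix.one_fin_two]

lemma swapMatrix_mul (p q : ℝ) : swapMatrix (p * q) = swapMatrix p * swapMatrix q := by
  simp only [swapMatrix, Matrix.mul_fin_two]
  congr! 3 <;> ring_nf

lemma swapMatrix_sgnb_mul_translationMatrix (d : Bool) (x : ℝ) :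
    swapMatrix (sgnb d) * translationMatrix x =
      translationMatrix (sgnb d * x) * swapMatrix (sgnb d) := by
  cases d <;> simp [swapMatrix, translationMatrix, sgnb]

lemma boostMatrix_eq_sum_hypb_smul_swapMatrix (t : ℝ) :
    boostMatrix t = ∑ d, hypb d t • swapMatrix (sgnb d) := by
  simp [boostMatrix, swapMatrix, hypb, sgnb]

lemma trace_translationMatrix_mul_swapMatrix (s q : ℝ) :
    (translationMatrix s * swapMatrix q).trace = (1 + q) * Real.cosh s := by
  simp only [translationMatrix, swapMatrix, Matrix.mul_fin_two, Matrix.trace_fin_two_of,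
    Real.cosh_eq]
  ring

end MatrixRelations

section Words

variable {n : ℕ}

lemma list_prod_ofFn_sum_smul {R A ι : Type*} [CommSemiring R] [Semiring A] [Algebra R A]
    [Fintype ι] (c : Fin n → ι → R) (m : Fin n → ι → A) :
    (List.ofFn fun k => ∑ i, c k i • m k i).prod =
      ∑ δ : Fin n → ι, (∏ k, c k (δ k)) • (List.ofFn fun k => m k (δ k)).prod := by
  simp only [← MultilinearMap.mkPiAlgebraFin_apply (R := R), MultilinearMap.map_sum,
    MultilinearMap.map_smul_univ]

lemma prod_translationMatrix_mul_swapMatrix (x : Fin n → ℝ) (δ : Fin n → Bool) :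
    (List.ofFn fun k => translationMatrix (x k) * swapMatrix (sgnb (δ k))).prod =
      translationMatrix (signedSum x δ) * swapMatrix (∏ k, sgnb (δ k)) := by
  induction n with
  | zero => simp [signedSum, translationMatrix_zero, swapMatrix_one]
  | succ n ih =>
    set s := signedSum (Fin.tail x) (Fin.tail δ)
    set q := ∏ k : Fin n, sgnb (δ k.succ)
    calc (List.ofFn fun k => translationMatrix (x k) * swapMatrix (sgnb (δ k))).prod
        = translationMatrix (x 0) * swapMatrix (sgnb (δ 0)) *
            (translationMatrix s * swapMatrix q) := by
          rw [List.ofFn_succ, List.prod_cons]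
          exact congrArg _ (ih (Fin.tail x) (Fin.tail δ))
      _ = translationMatrix (x 0) * (swapMatrix (sgnb (δ 0)) * translationMatrix s) *
            swapMatrix q := by simp only [mul_assoc]
      _ = translationMatrix (x 0) * translationMatrix (sgnb (δ 0) * s) *
            (swapMatrix (sgnb (δ 0)) * swapMatrix q) := by
          rw [swapMatrix_sgnb_mul_translationMatrix]
          simp only [mul_assoc]
      _ = translationMatrix (signedSum x δ) * swapMatrix (∏ k, sgnb (δ k)) := by
          rw [signedSum_succ, translationMatrix_add, Fin.prod_univ_succ, swapMatrix_mul]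

lemma prod_translationMatrix_mul_boostMatrix (x t : Fin n → ℝ) :
    (List.ofFn fun k => translationMatrix (x k) * boostMatrix (t k)).prod =
      ∑ δ : Fin n → Bool, (∏ k, hypb (δ k) (t k)) •
        (translationMatrix (signedSum x δ) * swapMatrix (∏ k, sgnb (δ k))) := by
  simp only [boostMatrix_eq_sum_hypb_smul_swapMatrix, Finset.mul_sum, mul_smul_comm,
    list_prod_ofFn_sum_smul, prod_translationMatrix_mul_swapMatrix]

end Words

theorem trace_formula_generalized_eight_general {n : ℕ} (x t : Fin n → ℝ) :
    (1 / 2) * (List.ofFn fun k => translationMatrix (x k) * boostMatrix (t k)).prod.trace =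
      ∑ δ ∈ Finset.univ.filter (fun δ : Fin n → Bool => (∏ k, sgnb (δ k)) = 1),
        (∏ k, hypb (δ k) (t k)) * Real.cosh (signedSum x δ) := by
  rw [prod_translationMatrix_mul_boostMatrix, Matrix.trace_sum, Finset.mul_sum, Finset.sum_filter]
  refine Finset.sum_congr rfl fun δ _ => ?_
  rw [Matrix.trace_smul, trace_translationMatrix_mul_swapMatrix, smul_eq_mul]
  rcases prod_sgnb_eq_one_or_neg_one Finset.univ δ with even | odd
  · rw [if_pos even, even]
    ring
  · rw [if_neg (by norm_num [odd]), odd]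
    ring

/-- The trace identity behind the length formula for generalized eights:
`(1/2)·Tr(a₁b₁⋯a_{2r}b_{2r}) = ∑_{δ₁⋯δ_{2r}=+1} ∏ₖ hyp_{δₖ}(θₖ/2) · cosh((1/2)∑ₖ ρ^δₖ εₖ Lₖ)`,
where `aₖ = diag(e^{εₖLₖ/2}, e^{-εₖLₖ/2})`, `bₖ = [[cosh(θₖ/2), sinh(θₖ/2)];
[sinh(θₖ/2), cosh(θₖ/2)]]` and `ρ^δₖ = ∏_{j<k} δⱼ`. -/
theorem trace_formula_generalized_eight (r : ℕ) (hr : 1 ≤ r)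
    (L θ ε : Fin (2 * r) → ℝ) (hε : ∀ k, ε k = 1 ∨ ε k = -1) :
    (1 / 2) * Matrix.trace
        ((List.ofFn (fun k : Fin (2 * r) =>
          (!![Real.exp (ε k * L k / 2), 0; 0, Real.exp (-(ε k * L k) / 2)] :
              Matrix (Fin 2) (Fin 2) ℝ) *
          !![Real.cosh (θ k / 2), Real.sinh (θ k / 2);
             Real.sinh (θ k / 2), Real.cosh (θ k / 2)])).prod) =
      ∑ δ ∈ Finset.univ.filter
          (fun δ : Fin (2 * r) → Bool => (∏ k, sgnb (δ k)) = 1),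
        (∏ k, hypb (δ k) (θ k / 2)) *
          Real.cosh ((1 / 2) * ∑ k,
            (∏ j ∈ Finset.univ.filter (fun j => j < k), sgnb (δ j)) * ε k * L k) := by
  simpa [translationMatrix, boostMatrix, signedSum, prefixSign, Finset.mul_sum, neg_div, mul_assoc,
    mul_div_assoc, div_eq_inv_mul, mul_left_comm] using
    trace_formula_generalized_eight_general (fun k => ε k * L k / 2) (fun k => θ k / 2)
end

section
/- Let f : ℝ² → ℝ be a C^∞ function whose support is compact and contained in the open upper half-plane {(x,y) ∈ ℝ² : y > 0}. Then ∫∫_{ℝ²} f(x,y) · (−(∂²f/∂x²(x,y) + ∂²f/∂y²(x,y))) dx dy ≥ (1/4) ∫∫_{ℝ²} f(x,y)²/y² dx dy. Equivalently, for the hyperbolic Laplacian Δ = −y²(∂²/∂x² + ∂²/∂y²) on the hyperbolic plane ℍ = {x+iy : y > 0} with area measure dμ = dx dy / y², one has ∫_ℍ f Δf dμ ≥ (1/4) ∫_ℍ f² dμ, i.e. the operator Δ − (1/4)Id is positive. -/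
open MeasureTheory Real

/-- The second partial derivative `∂²f/∂x²` of `f : ℝ × ℝ → ℝ`. -/
noncomputable def d2x (f : ℝ × ℝ → ℝ) (p : ℝ × ℝ) : ℝ :=
  deriv (deriv (fun x => f (x, p.2))) p.1

/-- The second partial derivative `∂²f/∂y²` of `f : ℝ × ℝ → ℝ`. -/
noncomputable def d2y (f : ℝ × ℝ → ℝ) (p : ℝ × ℝ) : ℝ :=
  deriv (deriv (fun y => f (p.1, y))) p.2

/-!
Integrating by parts, `∫ f·(-(f_xx + f_yy)) = ∫ f_x² + ∫ f_y²`, and the first term is nonnegative.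
The second is bounded below by Hardy's inequality `(1/4) ∫ f²/y² ≤ ∫ f_y²`: integrating
`f · ∂_y (f/y)` by parts gives `∫ f²/y² = 2 ∫ f f_y/y`, so that expanding the square in
`0 ≤ ∫ (f_y - f/(2y))²` leaves exactly `∫ f_y² - (1/4) ∫ f²/y²`.
-/

theorem integrable_mul_of_hasCompactSupport_of_continuousAt {X : Type*} [TopologicalSpace X]
    [MeasurableSpace X] [OpensMeasurableSpace X] {μ : Measure X} [IsFiniteMeasureOnCompacts μ]
    {f g : X → ℝ} (hf : Continuous f) (hsupp : HasCompactSupport f)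
    (hg : ∀ x ∈ tsupport f, ContinuousAt g x) : Integrable (fun x => f x * g x) μ := by
  have hcont : Continuous fun x => f x * g x := continuous_of_tsupport fun x hx =>
    hf.continuousAt.mul (hg x (tsupport_mul_subset_left hx))
  exact hcont.integrable_of_hasCompactSupport hsupp.mul_right

section DirectionalDerivative

variable {E F : Type*} [NormedAddCommGroup E] [NormedSpace ℝ E] [NormedAddCommGroup F]
  [NormedSpace ℝ F]

theorem deriv_comp_line {g : E → F} {a v : E} {t : ℝ} (hg : DifferentiableAt ℝ g (a + t • v)) :
    deriv (fun s : ℝ => g (a + s • v)) t = fderiv ℝ g (a + t • v) v := by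
  have hline : HasDerivAt (fun s : ℝ => a + s • v) v t := by
    simpa using ((hasDerivAt_id t).smul_const v).const_add a
  exact (hg.hasFDerivAt.comp_hasDerivAt t hline).deriv

theorem contDiff_fderiv_apply_const {f : E → F} {m n : WithTop ℕ∞} (hf : ContDiff ℝ n f)
    (hmn : m + 1 ≤ n) (v : E) : ContDiff ℝ m fun x => fderiv ℝ f x v :=
  (hf.fderiv_right hmn).clm_apply contDiff_const

theorem deriv_deriv_comp_line {f : E → F} (hf : ContDiff ℝ 2 f) (a v : E) (t : ℝ) :
    deriv (deriv fun s : ℝ => f (a + s • v)) t =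
      fderiv ℝ (fun x => fderiv ℝ f x v) (a + t • v) v := by
  have hfirst : (deriv fun s : ℝ => f (a + s • v)) = fun s => fderiv ℝ f (a + s • v) v :=
    funext fun _ => deriv_comp_line (hf.differentiable two_ne_zero _)
  have hdiff : Differentiable ℝ fun x => fderiv ℝ f x v :=
    (contDiff_fderiv_apply_const hf one_add_one_eq_two.le v).differentiable one_ne_zero
  rw [hfirst, deriv_comp_line (hdiff _)]

theorem fderiv_div_clm_apply {f : E → ℝ} {x : E} (hf : DifferentiableAt ℝ f x) (ℓ : E →L[ℝ] ℝ)
    (hx : ℓ x ≠ 0) (v : E) :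
    fderiv ℝ (fun z => f z / ℓ z) x v = fderiv ℝ f x v / ℓ x - ℓ v * (f x / ℓ x ^ 2) := by
  have hinv : HasFDerivAt (fun z => (ℓ z)⁻¹) (-(ℓ x ^ 2)⁻¹ • ℓ) x :=
    (hasDerivAt_inv hx).comp_hasFDerivAt x ℓ.hasFDerivAt
  simp only [div_eq_mul_inv]
  rw [(hf.hasFDerivAt.fun_mul hinv).fderiv]
  simp only [add_apply, smul_apply, smul_eq_mul]
  ring

end DirectionalDerivative

section Integrable

variable {E : Type*} [NormedAddCommGroup E] [NormedSpace ℝ E] [MeasurableSpace E]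
  [OpensMeasurableSpace E] {μ : Measure E} [IsFiniteMeasureOnCompacts μ] {f : E → ℝ}

theorem integrable_sq_fderiv_apply (hf : ContDiff ℝ 1 f) (hsupp : HasCompactSupport f) (v : E) :
    Integrable (fun x => fderiv ℝ f x v ^ 2) μ := by
  have hcont : Continuous fun x => fderiv ℝ f x v :=
    (contDiff_fderiv_apply_const hf (zero_add 1).le v).continuous
  simpa only [sq] using integrable_mul_of_hasCompactSupport_of_continuousAt hcont
    (hsupp.fderiv_apply ℝ v) fun _ _ => hcont.continuousAt

theorem integrable_mul_fderiv_fderiv_apply (hf : ContDiff ℝ 2 f) (hsupp : HasCompactSupport f)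
    (v : E) : Integrable (fun x => f x * fderiv ℝ (fun z => fderiv ℝ f z v) x v) μ := by
  have hfirst : ContDiff ℝ 1 fun x => fderiv ℝ f x v :=
    contDiff_fderiv_apply_const hf one_add_one_eq_two.le v
  have hsecond : Continuous fun x => fderiv ℝ (fun z => fderiv ℝ f z v) x v :=
    (contDiff_fderiv_apply_const hfirst (zero_add 1).le v).continuous
  exact integrable_mul_of_hasCompactSupport_of_continuousAt hf.continuous hsupp
    fun _ _ => hsecond.continuousAt

theorem integrable_sq_div_clm_sq {ℓ : E →L[ℝ] ℝ} (hf : Continuous f) (hsupp : HasCompactSupport f)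
    (hℓ : tsupport f ⊆ {x | ℓ x ≠ 0}) : Integrable (fun x => f x ^ 2 / ℓ x ^ 2) μ := by
  simp only [sq (f _), mul_div_assoc]
  exact integrable_mul_of_hasCompactSupport_of_continuousAt hf hsupp fun x hx =>
    hf.continuousAt.div (ℓ.continuous.pow 2).continuousAt (pow_ne_zero 2 (hℓ hx))

theorem integrable_mul_fderiv_apply_div_clm {ℓ : E →L[ℝ] ℝ} (hf : ContDiff ℝ 1 f)
    (hsupp : HasCompactSupport f) (hℓ : tsupport f ⊆ {x | ℓ x ≠ 0}) (v : E) :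
    Integrable (fun x => f x * (fderiv ℝ f x v / ℓ x)) μ :=
  integrable_mul_of_hasCompactSupport_of_continuousAt hf.continuous hsupp fun _ hx =>
    (contDiff_fderiv_apply_const hf (zero_add 1).le v).continuous.continuousAt.div
      ℓ.continuous.continuousAt (hℓ hx)

end Integrable

section IntegrationByParts

variable {E : Type*} [NormedAddCommGroup E] [NormedSpace ℝ E] [FiniteDimensional ℝ E]
  [MeasurableSpace E] [BorelSpace E] {μ : Measure E} [μ.IsAddHaarMeasure] {f : E → ℝ}

theorem integral_mul_fderiv_eq_neg_of_hasCompactSupport {g : E → ℝ} (hf : ContDiff ℝ 1 f)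
    (hsupp : HasCompactSupport f) (hg : ∀ x ∈ tsupport f, ContDiffAt ℝ 1 g x) (v : E) :
    ∫ x, f x * fderiv ℝ g x v ∂μ = -∫ x, fderiv ℝ f x v * g x ∂μ := by
  have hf'g : Integrable (fun x => fderiv ℝ f x v * g x) μ :=
    integrable_mul_of_hasCompactSupport_of_continuousAt
      (contDiff_fderiv_apply_const hf (zero_add 1).le v).continuous (hsupp.fderiv_apply ℝ v)
      fun x hx => (hg x (tsupport_fderiv_apply_subset ℝ v hx)).continuousAt
  have hfg' : Integrable (fun x => f x * fderiv ℝ g x v) μ :=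
    integrable_mul_of_hasCompactSupport_of_continuousAt hf.continuous hsupp fun x hx =>
      ((hg x hx).continuousAt_fderiv one_ne_zero).clm_apply continuousAt_const
  have hfg : Integrable (fun x => f x * g x) μ :=
    integrable_mul_of_hasCompactSupport_of_continuousAt hf.continuous hsupp
      fun x hx => (hg x hx).continuousAt
  exact integral_mul_fderiv_eq_neg_fderiv_mul_of_integrable hf'g hfg' hfg
    (fun x _ => hf.differentiable one_ne_zero x)
    fun x hx => (hg x hx).differentiableAt one_ne_zero

theorem integral_mul_fderiv_fderiv_eq_neg_integral_sq (hf : ContDiff ℝ 2 f)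
    (hsupp : HasCompactSupport f) (v : E) :
    ∫ x, f x * fderiv ℝ (fun z => fderiv ℝ f z v) x v ∂μ = -∫ x, fderiv ℝ f x v ^ 2 ∂μ := by
  simpa only [sq] using integral_mul_fderiv_eq_neg_of_hasCompactSupport
    (hf.of_le one_le_two) hsupp
    (fun _ _ => (contDiff_fderiv_apply_const hf one_add_one_eq_two.le v).contDiffAt) v

theorem clm_apply_mul_integral_sq_div_sq {ℓ : E →L[ℝ] ℝ} (hf : ContDiff ℝ 1 f)
    (hsupp : HasCompactSupport f) (hℓ : tsupport f ⊆ {x | ℓ x ≠ 0}) (v : E) :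
    ℓ v * ∫ x, f x ^ 2 / ℓ x ^ 2 ∂μ = 2 * ∫ x, f x * (fderiv ℝ f x v / ℓ x) ∂μ := by
  have hquotient : ∀ x ∈ tsupport f, ContDiffAt ℝ 1 (fun z => f z / ℓ z) x :=
    fun x hx => hf.contDiffAt.div ℓ.contDiff.contDiffAt (hℓ hx)
  have hderiv : ∀ x, f x * fderiv ℝ (fun z => f z / ℓ z) x v =
      f x * (fderiv ℝ f x v / ℓ x) - ℓ v * (f x ^ 2 / ℓ x ^ 2) := by
    intro x
    by_cases hx : x ∈ tsupport f
    · rw [fderiv_div_clm_apply (hf.differentiable one_ne_zero x) ℓ (hℓ hx)]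
      ring
    · simp [image_eq_zero_of_notMem_tsupport hx]
  have hparts := integral_mul_fderiv_eq_neg_of_hasCompactSupport (μ := μ) hf hsupp hquotient v
  have hcomm : ∀ x, fderiv ℝ f x v * (f x / ℓ x) = f x * (fderiv ℝ f x v / ℓ x) :=
    fun x => mul_div_left_comm _ _ _
  simp only [hderiv, hcomm] at hparts
  rw [integral_sub (integrable_mul_fderiv_apply_div_clm hf hsupp hℓ v)
    ((integrable_sq_div_clm_sq hf.continuous hsupp hℓ).const_mul _), integral_const_mul] at hparts
  linarith

theorem hardy_inequality_clm {ℓ : E →L[ℝ] ℝ} (hf : ContDiff ℝ 1 f) (hsupp : HasCompactSupport f)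
    (hℓ : tsupport f ⊆ {x | ℓ x ≠ 0}) (v : E) :
    ℓ v ^ 2 / 4 * ∫ x, f x ^ 2 / ℓ x ^ 2 ∂μ ≤ ∫ x, fderiv ℝ f x v ^ 2 ∂μ := by
  have hcross := (integrable_mul_fderiv_apply_div_clm (μ := μ) hf hsupp hℓ v).const_mul (ℓ v)
  have hweight :=
    (integrable_sq_div_clm_sq (μ := μ) hf.continuous hsupp hℓ).const_mul (ℓ v ^ 2 / 4)
  have hgrad := integrable_sq_fderiv_apply (μ := μ) hf hsupp v
  have hexpand : ∫ x, (fderiv ℝ f x v - ℓ v / 2 * (f x / ℓ x)) ^ 2 ∂μ =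
      ∫ x, fderiv ℝ f x v ^ 2 ∂μ - ℓ v ^ 2 / 4 * ∫ x, f x ^ 2 / ℓ x ^ 2 ∂μ := calc
    _ = ∫ x, fderiv ℝ f x v ^ 2 - ℓ v * (f x * (fderiv ℝ f x v / ℓ x)) +
          ℓ v ^ 2 / 4 * (f x ^ 2 / ℓ x ^ 2) ∂μ := by
      congr 1 with x
      ring
    _ = ∫ x, fderiv ℝ f x v ^ 2 ∂μ - ℓ v * ∫ x, f x * (fderiv ℝ f x v / ℓ x) ∂μ +
          ℓ v ^ 2 / 4 * ∫ x, f x ^ 2 / ℓ x ^ 2 ∂μ := by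
      rw [integral_add (hgrad.sub' hcross) hweight, integral_sub hgrad hcross, integral_const_mul,
        integral_const_mul]
    _ = _ := by
      linear_combination (ℓ v / 2) * clm_apply_mul_integral_sq_div_sq (μ := μ) hf hsupp hℓ v
  have hnonneg : 0 ≤ ∫ x, (fderiv ℝ f x v - ℓ v / 2 * (f x / ℓ x)) ^ 2 ∂μ :=
    integral_nonneg fun _ => sq_nonneg _
  linarith

end IntegrationByParts

section Plane

variable {f : ℝ × ℝ → ℝ}

theorem d2x_eq_fderiv_fderiv (hf : ContDiff ℝ 2 f) (p : ℝ × ℝ) :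
    d2x f p = fderiv ℝ (fun q => fderiv ℝ f q (1, 0)) p (1, 0) := by
  simpa [d2x] using deriv_deriv_comp_line hf (0, p.2) (1, 0) p.1

theorem d2y_eq_fderiv_fderiv (hf : ContDiff ℝ 2 f) (p : ℝ × ℝ) :
    d2y f p = fderiv ℝ (fun q => fderiv ℝ f q (0, 1)) p (0, 1) := by
  simpa [d2y] using deriv_deriv_comp_line hf (p.1, 0) (0, 1) p.2

theorem integral_mul_neg_laplacian_eq (hf : ContDiff ℝ 2 f) (hsupp : HasCompactSupport f) :
    ∫ p, f p * (-(d2x f p + d2y f p)) =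
      (∫ p, fderiv ℝ f p (1, 0) ^ 2) + ∫ p, fderiv ℝ f p (0, 1) ^ 2 := by
  simp only [d2x_eq_fderiv_fderiv hf, d2y_eq_fderiv_fderiv hf, mul_neg, mul_add]
  rw [integral_neg, integral_add (integrable_mul_fderiv_fderiv_apply hf hsupp _)
    (integrable_mul_fderiv_fderiv_apply hf hsupp _),
    integral_mul_fderiv_fderiv_eq_neg_integral_sq hf hsupp,
    integral_mul_fderiv_fderiv_eq_neg_integral_sq hf hsupp, neg_add, neg_neg, neg_neg]

theorem mckean_quarter_bound_general (hf : ContDiff ℝ 2 f) (hsupp : HasCompactSupport f)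
    (hne : tsupport f ⊆ {p : ℝ × ℝ | p.2 ≠ 0}) :
    (1 / 4) * ∫ p : ℝ × ℝ, (f p) ^ 2 / p.2 ^ 2 ≤
      ∫ p : ℝ × ℝ, f p * (-(d2x f p + d2y f p)) := by
  have hardy : (1 / 4) * ∫ p : ℝ × ℝ, (f p) ^ 2 / p.2 ^ 2 ≤ ∫ p, fderiv ℝ f p (0, 1) ^ 2 := by
    simpa using hardy_inequality_clm (μ := volume) (ℓ := ContinuousLinearMap.snd ℝ ℝ ℝ)
      (hf.of_le one_le_two) hsupp hne (0, 1)
  calc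
    _ ≤ ∫ p, fderiv ℝ f p (0, 1) ^ 2 := hardy
    _ ≤ (∫ p, fderiv ℝ f p (1, 0) ^ 2) + ∫ p, fderiv ℝ f p (0, 1) ^ 2 :=
      le_add_of_nonneg_left (integral_nonneg fun _ => sq_nonneg _)
    _ = _ := (integral_mul_neg_laplacian_eq hf hsupp).symm

end Plane

/-- McKean's inequality: for `f` smooth with compact support contained in the open upper
half-plane `{y > 0}`, `∫∫ f·(-(f_{xx} + f_{yy})) dx dy ≥ (1/4)∫∫ f²/y² dx dy`.  Equivalently,
for the hyperbolic Laplacian `Δ = -y²(∂²ₓ + ∂²_y)` on `ℍ` with area measure `dμ = dx dy/y²`,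
`∫ f Δf dμ ≥ (1/4) ∫ f² dμ`, i.e. `Δ - (1/4)Id ≥ 0` on `L²(ℍ)`. -/
theorem mckean_quarter_bound (f : ℝ × ℝ → ℝ) (hf : ContDiff ℝ (⊤ : ℕ∞) f)
    (hsupp : HasCompactSupport f)
    (hpos : tsupport f ⊆ {p : ℝ × ℝ | 0 < p.2}) :
    (1 / 4) * ∫ p : ℝ × ℝ, (f p) ^ 2 / p.2 ^ 2 ≤
      ∫ p : ℝ × ℝ, f p * (-(d2x f p + d2y f p)) :=
  mckean_quarter_bound_general (contDiff_infty.mp hf 2) hsupp fun _ hp => (hpos hp).ne'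
end
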